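/- arXiv:math/0404097 — 2 statements merged into one kernel-verified Lean document; each statement's English description precedes it below -/
import Mathlib

section
/- Let Θ : (0,∞) × Ω → S be a jointly measurable process with values in a measurable space S that is 0-self-similar, i.e. for every c > 0 the processes (Θ_{ct})_{t>0} and (Θ_t)_{t>0} have the same finite-dimensional distributions. For a measurable set B ⊆ S let μ_Θ(B) := ∫₀¹ 1_B(Θ_t) dt. Then for every measurable B ⊆ S, almost surely P(Θ_1 ∈ B | σ(μ_Θ(B))) = μ_Θ(B), where the conditional probability is taken with respect to the σ-algebra generated by the real random variable μ_Θ(B). -/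
open MeasureTheory ProbabilityTheory

/-!
Put `M t = t⁻¹ ∫₀ᵗ X s ds`. Self-similarity and Fubini (expand the `n`-th power of an integral as an
integral over a cube) show that `E[X t * M t ^ n]` does not depend on `t > 0`. On the other hand
`(t * M t) ^ (n + 1)` is absolutely continuous with derivative `(n + 1) t ^ n * X t * M t ^ n`, so
integrating over `[0, 1]` gives `E[M 1 ^ (n + 1)] = E[X 1 * M 1 ^ n]` for every `n`: the variable
`X 1 - M 1` is orthogonal to all powers of the bounded variable `M 1`. Since a finite measure on a
compact interval is determined by its moments, `E[X 1 - M 1 | σ(M 1)] = 0`.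
-/

open Set

section Hausdorff

variable {μ ν : Measure ℝ} [IsFiniteMeasure μ] [IsFiniteMeasure ν] {a b : ℝ}

theorem integrable_of_continuous_of_ae_mem_Icc {f : ℝ → ℝ} (hf : Continuous f)
    (hμ : ∀ᵐ x ∂μ, x ∈ Icc a b) : Integrable f μ := by
  obtain ⟨K, hK⟩ := isCompact_Icc.exists_bound_of_continuousOn (hf.continuousOn (s := Icc a b))
  exact .of_bound hf.aestronglyMeasurable K (hμ.mono hK)

theorem integral_polynomial_eq_of_forall_integral_pow_eq (hμ : ∀ᵐ x ∂μ, x ∈ Icc a b)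
    (hν : ∀ᵐ x ∂ν, x ∈ Icc a b) (h : ∀ n : ℕ, ∫ x, x ^ n ∂μ = ∫ x, x ^ n ∂ν)
    (p : Polynomial ℝ) : ∫ x, p.eval x ∂μ = ∫ x, p.eval x ∂ν := by
  simp only [Polynomial.eval_eq_sum_range]
  rw [integral_finsetSum _ fun n _ => integrable_of_continuous_of_ae_mem_Icc (by fun_prop) hμ,
    integral_finsetSum _ fun n _ => integrable_of_continuous_of_ae_mem_Icc (by fun_prop) hν]
  simp only [integral_const_mul, h]

theorem dist_integral_le_of_ae_mem_Icc {f g : ℝ → ℝ} {ε : ℝ} (hf : Continuous f)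
    (hg : Continuous g) (hfg : ∀ x ∈ Icc a b, |f x - g x| ≤ ε) (hμ : ∀ᵐ x ∂μ, x ∈ Icc a b) :
    dist (∫ x, f x ∂μ) (∫ x, g x ∂μ) ≤ ε * μ.real univ := by
  rw [dist_eq_norm, ← integral_sub (integrable_of_continuous_of_ae_mem_Icc hf hμ)
    (integrable_of_continuous_of_ae_mem_Icc hg hμ)]
  exact norm_integral_le_of_norm_le_const (hμ.mono hfg)

theorem measure_eq_of_forall_integral_pow_eq (hμ : ∀ᵐ x ∂μ, x ∈ Icc a b)
    (hν : ∀ᵐ x ∂ν, x ∈ Icc a b) (h : ∀ n : ℕ, ∫ x, x ^ n ∂μ = ∫ x, x ^ n ∂ν) : μ = ν := by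
  refine ext_of_forall_integral_eq_of_IsFiniteMeasure fun f => eq_of_forall_dist_le fun δ hδ => ?_
  obtain ⟨ε, hε, hεδ⟩ := exists_pos_mul_lt hδ (μ.real univ + ν.real univ)
  obtain ⟨p, hp⟩ :=
    exists_polynomial_near_of_continuousOn a b f f.continuous.continuousOn ε hε
  have hpf : ∀ x ∈ Icc a b, |p.eval x - f x| ≤ ε := fun x hx => (hp x hx).le
  calc dist (∫ x, f x ∂μ) (∫ x, f x ∂ν)
      ≤ dist (∫ x, p.eval x ∂μ) (∫ x, f x ∂μ) + dist (∫ x, p.eval x ∂μ) (∫ x, f x ∂ν) :=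
        dist_triangle_left _ _ _
    _ = dist (∫ x, p.eval x ∂μ) (∫ x, f x ∂μ) + dist (∫ x, p.eval x ∂ν) (∫ x, f x ∂ν) := by
        rw [integral_polynomial_eq_of_forall_integral_pow_eq hμ hν h]
    _ ≤ ε * μ.real univ + ε * ν.real univ :=
        add_le_add (dist_integral_le_of_ae_mem_Icc p.continuous f.continuous hpf hμ)
          (dist_integral_le_of_ae_mem_Icc p.continuous f.continuous hpf hν)
    _ ≤ δ := by linarith

end Hausdorff

section Orthogonality

variable {Ω : Type*} [MeasurableSpace Ω] {μ : Measure Ω} {M Z : Ω → ℝ} {C : ℝ}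

theorem integral_map_withDensity_ofReal (hM : Measurable M) (hZ : AEMeasurable Z μ) {f : ℝ → ℝ}
    (hf : Measurable f) :
    ∫ x, f x ∂((μ.withDensity fun ω => ENNReal.ofReal (Z ω)).map M)
      = ∫ ω, max (Z ω) 0 * f (M ω) ∂μ := by
  rw [integral_map hM.aemeasurable hf.aestronglyMeasurable,
    integral_withDensity_eq_integral_toReal_smul₀ hZ.ennreal_ofReal
      (.of_forall fun _ => ENNReal.ofReal_lt_top)]
  simp only [ENNReal.toReal_ofReal', smul_eq_mul]

theorem integrable_mul_pow_of_norm_le (hZ : Integrable Z μ) (hM : AEStronglyMeasurable M μ)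
    (hMC : ∀ ω, ‖M ω‖ ≤ C) (n : ℕ) : Integrable (fun ω => Z ω * M ω ^ n) μ := by
  refine hZ.mul_bdd (c := C ^ n) (hM.pow n) (.of_forall fun ω => ?_)
  rw [norm_pow]
  gcongr
  exact hMC ω

theorem map_withDensity_ofReal_eq_map_withDensity_ofReal_neg
    (hM : Measurable M) (hMC : ∀ ω, ‖M ω‖ ≤ C) (hZ : Integrable Z μ)
    (h : ∀ n : ℕ, ∫ ω, Z ω * M ω ^ n ∂μ = 0) :
    (μ.withDensity fun ω => ENNReal.ofReal (Z ω)).map M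
      = (μ.withDensity fun ω => ENNReal.ofReal (-Z ω)).map M := by
  have := isFiniteMeasure_withDensity_ofReal hZ.2
  have := isFiniteMeasure_withDensity_ofReal hZ.neg.2
  have hsupp (ν : Measure Ω) : ∀ᵐ x ∂(ν.map M), x ∈ Icc (-C) C :=
    (ae_map_iff hM.aemeasurable measurableSet_Icc).2 (.of_forall fun ω => abs_le.1 (hMC ω))
  refine measure_eq_of_forall_integral_pow_eq (hsupp _) (hsupp _) fun n => ?_
  rw [integral_map_withDensity_ofReal hM hZ.aemeasurable (by fun_prop),
    integral_map_withDensity_ofReal hM hZ.aemeasurable.fun_neg (by fun_prop), ← sub_eq_zero,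
    ← integral_sub (integrable_mul_pow_of_norm_le hZ.pos_part hM.aestronglyMeasurable hMC n)
      (integrable_mul_pow_of_norm_le hZ.neg_part hM.aestronglyMeasurable hMC n)]
  simpa only [← sub_mul, max_zero_sub_max_neg_zero_eq_self] using h n

theorem setIntegral_preimage_eq_zero_of_forall_integral_mul_pow
    (hM : Measurable M) (hMC : ∀ ω, ‖M ω‖ ≤ C) (hZ : Integrable Z μ)
    (h : ∀ n : ℕ, ∫ ω, Z ω * M ω ^ n ∂μ = 0) {T : Set ℝ} (hT : MeasurableSet T) :
    ∫ ω in M ⁻¹' T, Z ω ∂μ = 0 := by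
  have hT_eq := congrArg (· T) (map_withDensity_ofReal_eq_map_withDensity_ofReal_neg hM hMC hZ h)
  simp only [Measure.map_apply hM hT, withDensity_apply _ (hM hT)] at hT_eq
  rw [integral_eq_lintegral_pos_part_sub_lintegral_neg_part hZ.integrableOn, hT_eq, sub_self]

theorem condExp_comap_ae_eq_zero_of_forall_integral_mul_pow [IsFiniteMeasure μ]
    (hM : Measurable M) (hMC : ∀ ω, ‖M ω‖ ≤ C) (hZ : Integrable Z μ)
    (h : ∀ n : ℕ, ∫ ω, Z ω * M ω ^ n ∂μ = 0) :
    μ[Z | MeasurableSpace.comap M inferInstance] =ᵐ[μ] 0 := by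
  refine (ae_eq_condExp_of_forall_setIntegral_eq hM.comap_le hZ
    (fun _ _ _ => integrableOn_zero) ?_ aestronglyMeasurable_zero).symm
  rintro _ ⟨T, hT, rfl⟩ -
  simpa using (setIntegral_preimage_eq_zero_of_forall_integral_mul_pow hM hMC hZ h hT).symm

end Orthogonality

section PowerRule

variable {f : ℝ → ℝ} {a b : ℝ}

theorem absolutelyContinuousOnInterval_pow (hf : AbsolutelyContinuousOnInterval f a b) (n : ℕ) :
    AbsolutelyContinuousOnInterval (fun t => f t ^ n) a b := by
  induction n with
  | zero => simpa only [pow_zero] using contDiffOn_const.absolutelyContinuousOnInterval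
  | succ n ih => simpa only [pow_succ] using ih.fun_mul hf

theorem integral_pow_succ_eq_integral_mul_pow (hf : IntervalIntegrable f volume a b) (n : ℕ) :
    (∫ t in a..b, f t) ^ (n + 1)
      = ∫ t in a..b, (n + 1) * (∫ s in a..t, f s) ^ n * f t := by
  have hac := absolutelyContinuousOnInterval_pow
    (hf.absolutelyContinuousOnInterval_intervalIntegral left_mem_uIcc) (n + 1)
  have hFTC := hac.integral_deriv_eq_sub
  rw [intervalIntegral.integral_same, zero_pow n.succ_ne_zero, sub_zero] at hFTC
  rw [← hFTC]
  refine intervalIntegral.integral_congr_ae ?_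
  filter_upwards [hf.ae_hasDerivAt_integral] with t ht htmem
  have hderiv := ((ht (uIoc_subset_uIcc htmem) a left_mem_uIcc).fun_pow (n + 1)).deriv
  simpa using hderiv

end PowerRule

section SelfSimilar

variable {Ω E F : Type*} [MeasurableSpace Ω] [MeasurableSpace E] [MeasurableSpace F]

/-- A process `X` is `0`-self-similar under `P` if `(X (c * t))_{t > 0}` and `(X t)_{t > 0}` have
the same finite-dimensional distributions for every `c > 0`. The time index ranges over `ℝ`, but
only the values at positive times matter. -/
def IsZeroSelfSimilar (X : ℝ → Ω → E) (P : Measure Ω) : Prop :=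
  ∀ c : ℝ, 0 < c → ∀ (n : ℕ) (t : Fin n → ℝ), (∀ i, 0 < t i) →
    Measure.map (fun ω (i : Fin n) => X (c * t i) ω) P
      = Measure.map (fun ω (i : Fin n) => X (t i) ω) P

namespace IsZeroSelfSimilar

variable {P : Measure Ω}

theorem comp {X : ℝ → Ω → E} (hX : IsZeroSelfSimilar X P) (hXm : ∀ t, Measurable (X t))
    {g : E → F} (hg : Measurable g) : IsZeroSelfSimilar (fun t ω => g (X t ω)) P := by
  intro c hc n t ht
  have hgn : Measurable fun (x : Fin n → E) i => g (x i) := by fun_prop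
  have h := congrArg (Measure.map fun (x : Fin n → E) i => g (x i)) (hX c hc n t ht)
  rwa [Measure.map_map hgn (by fun_prop), Measure.map_map hgn (by fun_prop)] at h

theorem integral_prod_comp_mul {X : ℝ → Ω → ℝ} (hX : IsZeroSelfSimilar X P)
    (hXm : ∀ t, Measurable (X t)) {c : ℝ} (hc : 0 < c) {n : ℕ} {t : Fin n → ℝ} (ht : ∀ i, 0 < t i) :
    ∫ ω, ∏ i, X (c * t i) ω ∂P = ∫ ω, ∏ i, X (t i) ω ∂P := by
  have hprod : Measurable fun x : Fin n → ℝ => ∏ i, x i := by fun_prop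
  have h := congrArg (fun ν => ∫ x, ∏ i, x i ∂ν) (hX c hc n t ht)
  simpa only [integral_map (measurable_pi_lambda _ fun _ => hXm _).aemeasurable
    hprod.aestronglyMeasurable] using h

end IsZeroSelfSimilar

end SelfSimilar

section TimeAverage

variable {Ω : Type*}

/-- The average `t⁻¹ ∫₀ᵗ X s ds` of the process `X` up to time `t`, written as `∫₀¹ X (t s) ds` so
that no division is needed and scaling of time acts on the integrand. -/
noncomputable def timeAverage (X : ℝ → Ω → ℝ) (t : ℝ) (ω : Ω) : ℝ :=
  ∫ s in (0:ℝ)..1, X (t * s) ω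

variable {X : ℝ → Ω → ℝ} {C : ℝ}

theorem timeAverage_one (X : ℝ → Ω → ℝ) :
    timeAverage X 1 = fun ω => ∫ s in (0:ℝ)..1, X s ω := by
  ext ω
  simp only [timeAverage, one_mul]

theorem mul_timeAverage (X : ℝ → Ω → ℝ) (t : ℝ) (ω : Ω) :
    t * timeAverage X t ω = ∫ s in (0:ℝ)..t, X s ω := by
  simpa [timeAverage] using
    intervalIntegral.mul_integral_comp_mul_left (f := fun s => X s ω) (a := 0) (b := 1) t

theorem norm_timeAverage_le (hXC : ∀ t ω, ‖X t ω‖ ≤ C) (t : ℝ) (ω : Ω) :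
    ‖timeAverage X t ω‖ ≤ C := by
  simpa [timeAverage] using intervalIntegral.norm_integral_le_of_norm_le_const (a := 0) (b := 1)
    fun s _ => hXC (t * s) ω

theorem norm_mul_timeAverage_pow_le (hXC : ∀ t ω, ‖X t ω‖ ≤ C) (n : ℕ) (t : ℝ) (ω : Ω) :
    ‖X t ω * timeAverage X t ω ^ n‖ ≤ C * C ^ n := by
  have hC : 0 ≤ C := (norm_nonneg _).trans (hXC t ω)
  rw [norm_mul, norm_pow]
  gcongr
  exacts [hXC t ω, norm_timeAverage_le hXC t ω]

variable [MeasurableSpace Ω]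

theorem measurable_uncurry_timeAverage (hX : Measurable (Function.uncurry X)) :
    Measurable (Function.uncurry (timeAverage X)) := by
  have hXs : Measurable fun p : (ℝ × Ω) × ℝ => X (p.1.1 * p.2) p.1.2 :=
    hX.comp (f := fun p : (ℝ × Ω) × ℝ => (p.1.1 * p.2, p.1.2)) (by fun_prop)
  simp only [Function.uncurry_def, timeAverage, intervalIntegral.integral_of_le zero_le_one]
  exact hXs.stronglyMeasurable.integral_prod_right'.measurable

theorem timeAverage_one_pow_succ (hX : Measurable (Function.uncurry X))
    (hXC : ∀ t ω, ‖X t ω‖ ≤ C) (n : ℕ) (ω : Ω) :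
    timeAverage X 1 ω ^ (n + 1)
      = ∫ t in (0:ℝ)..1, (n + 1) * t ^ n * (X t ω * timeAverage X t ω ^ n) := by
  have hint : IntervalIntegrable (fun s => X s ω) volume 0 1 :=
    (intervalIntegrable_const (c := C)).mono_fun hX.of_uncurry_right.aestronglyMeasurable
      (.of_forall fun s => (hXC s ω).trans (le_abs_self C))
  rw [timeAverage_one, integral_pow_succ_eq_integral_mul_pow hint]
  congr with t
  rw [← mul_timeAverage, mul_pow]
  ring

variable {P : Measure Ω} [IsFiniteMeasure P]

theorem integrable_timeAverage (hX : Measurable (Function.uncurry X))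
    (hXC : ∀ t ω, ‖X t ω‖ ≤ C) (t : ℝ) : Integrable (timeAverage X t) P :=
  .of_bound (measurable_uncurry_timeAverage hX).of_uncurry_left.aestronglyMeasurable C
    (.of_forall (norm_timeAverage_le hXC t))

theorem integral_mul_timeAverage_pow (hX : Measurable (Function.uncurry X))
    (hXC : ∀ t ω, ‖X t ω‖ ≤ C) (n : ℕ) (t : ℝ) :
    ∫ ω, X t ω * timeAverage X t ω ^ n ∂P
      = ∫ s : Fin n → ℝ, ∫ ω, X t ω * ∏ i, X (t * s i) ω ∂P
          ∂(Measure.pi fun _ => volume.restrict (Ioc 0 1)) := by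
  have hint : Integrable (fun p : Ω × (Fin n → ℝ) => X t p.1 * ∏ i, X (t * p.2 i) p.1)
      (P.prod (Measure.pi fun _ => volume.restrict (Ioc 0 1))) := by
    have hXs (i : Fin n) : Measurable fun p : Ω × (Fin n → ℝ) => X (t * p.2 i) p.1 :=
      hX.comp (f := fun p : Ω × (Fin n → ℝ) => (t * p.2 i, p.1)) (by fun_prop)
    have hXt : Measurable (X t) := hX.of_uncurry_left
    have hprod := Finset.univ.measurable_fun_prod fun i _ => hXs i
    refine .of_bound ((hXt.comp measurable_fst).mul hprod).aestronglyMeasurable (C * C ^ n)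
      (.of_forall fun p => ?_)
    have hC : 0 ≤ C := (norm_nonneg _).trans (hXC t p.1)
    rw [norm_mul, norm_prod, ← Fin.prod_const]
    gcongr
    exacts [hXC _ _, hXC _ _]
  rw [← integral_integral_swap hint]
  congr with ω
  rw [integral_const_mul, integral_fintype_prod_eq_pow (fun s => X (t * s) ω), Fintype.card_fin,
    timeAverage, intervalIntegral.integral_of_le zero_le_one]

theorem IsZeroSelfSimilar.integral_mul_timeAverage_pow_eq (hss : IsZeroSelfSimilar X P)
    (hX : Measurable (Function.uncurry X)) (hXC : ∀ t ω, ‖X t ω‖ ≤ C) (n : ℕ) {t : ℝ}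
    (ht : 0 < t) :
    ∫ ω, X t ω * timeAverage X t ω ^ n ∂P = ∫ ω, X 1 ω * timeAverage X 1 ω ^ n ∂P := by
  rw [integral_mul_timeAverage_pow hX hXC, integral_mul_timeAverage_pow hX hXC]
  have hpos : ∀ᵐ s ∂(Measure.pi fun _ : Fin n => volume.restrict (Ioc (0:ℝ) 1)), ∀ i, 0 < s i :=
    ae_all_iff.2 fun i => (Measure.quasiMeasurePreserving_eval _ i).ae <|
      (ae_restrict_mem measurableSet_Ioc).mono fun _ hs => hs.1
  refine integral_congr_ae (hpos.mono fun s hs => ?_)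
  have hcons : ∀ i, 0 < (Fin.cons 1 s : Fin (n + 1) → ℝ) i := Fin.cases one_pos hs
  simpa [Fin.prod_univ_succ] using
    hss.integral_prod_comp_mul (fun _ => hX.of_uncurry_left) ht hcons

theorem integrable_prod_mul_timeAverage_pow (hX : Measurable (Function.uncurry X))
    (hXC : ∀ t ω, ‖X t ω‖ ≤ C) (n : ℕ) :
    Integrable (fun p : ℝ × Ω => (n + 1) * p.1 ^ n * (X p.1 p.2 * timeAverage X p.1 p.2 ^ n))
      ((volume.restrict (Ioc 0 1)).prod P) := by
  have hM : Measurable fun p : ℝ × Ω => timeAverage X p.1 p.2 := measurable_uncurry_timeAverage hX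
  have hX' : Measurable fun p : ℝ × Ω => X p.1 p.2 := hX
  have hIoc : ∀ᵐ p ∂((volume.restrict (Ioc (0:ℝ) 1)).prod P), p.1 ∈ Ioc 0 1 :=
    Measure.quasiMeasurePreserving_fst.ae (ae_restrict_mem measurableSet_Ioc)
  refine .of_bound (by fun_prop) ((n + 1) * (C * C ^ n)) (hIoc.mono fun p hp => ?_)
  rw [norm_mul]
  gcongr
  · rw [Real.norm_of_nonneg (by have := hp.1; positivity)]
    exact mul_le_of_le_one_right (by positivity) (pow_le_one₀ hp.1.le hp.2)
  · exact norm_mul_timeAverage_pow_le hXC n p.1 p.2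

theorem IsZeroSelfSimilar.integral_timeAverage_one_pow_succ (hss : IsZeroSelfSimilar X P)
    (hX : Measurable (Function.uncurry X)) (hXC : ∀ t ω, ‖X t ω‖ ≤ C) (n : ℕ) :
    ∫ ω, timeAverage X 1 ω ^ (n + 1) ∂P = ∫ ω, X 1 ω * timeAverage X 1 ω ^ n ∂P := by
  calc ∫ ω, timeAverage X 1 ω ^ (n + 1) ∂P
      = ∫ ω, (∫ t in (0:ℝ)..1, (n + 1) * t ^ n * (X t ω * timeAverage X t ω ^ n)) ∂P := by
        simp only [timeAverage_one_pow_succ hX hXC]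
    _ = ∫ t in (0:ℝ)..1, (n + 1) * t ^ n * ∫ ω, X t ω * timeAverage X t ω ^ n ∂P := by
        rw [← intervalIntegral_integral_swap (by
          rw [uIoc_of_le zero_le_one]
          exact integrable_prod_mul_timeAverage_pow hX hXC n)]
        simp only [integral_const_mul]
    _ = ∫ t in (0:ℝ)..1, (n + 1) * t ^ n * ∫ ω, X 1 ω * timeAverage X 1 ω ^ n ∂P := by
        refine intervalIntegral.integral_congr_ae (.of_forall fun t ht => ?_)
        rw [uIoc_of_le zero_le_one] at ht
        rw [hss.integral_mul_timeAverage_pow_eq hX hXC n ht.1]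
    _ = ∫ ω, X 1 ω * timeAverage X 1 ω ^ n ∂P := by
        rw [intervalIntegral.integral_mul_const, intervalIntegral.integral_const_mul, integral_pow]
        field_simp
        simp

theorem statement1_general (hss : IsZeroSelfSimilar X P)
    (hX : Measurable (Function.uncurry X)) (hXC : ∀ t ω, ‖X t ω‖ ≤ C) :
    P[X 1 | MeasurableSpace.comap (timeAverage X 1) inferInstance] =ᵐ[P] timeAverage X 1 := by
  have hM : Measurable (timeAverage X 1) := (measurable_uncurry_timeAverage hX).of_uncurry_left
  have hMi : Integrable (timeAverage X 1) P := integrable_timeAverage hX hXC 1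
  have hXi : Integrable (X 1) P :=
    .of_bound hX.of_uncurry_left.aestronglyMeasurable C (.of_forall (hXC 1))
  have horth (n : ℕ) :
      ∫ ω, (X 1 - timeAverage X 1) ω * timeAverage X 1 ω ^ n ∂P = 0 := by
    have hpow {Z : Ω → ℝ} (hZ : Integrable Z P) :=
      integrable_mul_pow_of_norm_le hZ hM.aestronglyMeasurable (norm_timeAverage_le hXC 1) n
    simp only [Pi.sub_apply, sub_mul]
    rw [integral_sub (hpow hXi) (hpow hMi), sub_eq_zero,
      ← hss.integral_timeAverage_one_pow_succ hX hXC n]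
    simp only [pow_succ']
  have hzero := condExp_comap_ae_eq_zero_of_forall_integral_mul_pow hM (norm_timeAverage_le hXC 1)
    (hXi.sub hMi) horth
  have hself : P[timeAverage X 1 | MeasurableSpace.comap (timeAverage X 1) inferInstance]
      = timeAverage X 1 :=
    condExp_of_stronglyMeasurable hM.comap_le (comap_measurable _).stronglyMeasurable hMi
  filter_upwards [hzero, condExp_sub hXi hMi
    (MeasurableSpace.comap (timeAverage X 1) inferInstance)] with ω hω hsub
  rw [hω, hself] at hsub
  exact sub_eq_zero.1 hsub.symm

end TimeAverage

/-- Let `Θ : (0,∞) × Ω → S` be a jointly measurable `0`-self-similar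
process with values in a measurable space `S`.  For measurable `B ⊆ S` let
`μ_Θ(B) := ∫₀¹ 1_B(Θ_t) dt`.  Then for every measurable `B`, almost surely
`P(Θ_1 ∈ B | σ(μ_Θ(B))) = μ_Θ(B)`. -/
theorem statement1
    {Ω S : Type*} [MeasurableSpace Ω] [MeasurableSpace S]
    (P : Measure Ω) [IsProbabilityMeasure P]
    (Θ : ℝ → Ω → S)
    (hΘ : Measurable fun p : ℝ × Ω => Θ p.1 p.2)
    (hss : ∀ c : ℝ, 0 < c → ∀ (n : ℕ) (t : Fin n → ℝ), (∀ i, 0 < t i) →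
      Measure.map (fun ω (i : Fin n) => Θ (c * t i) ω) P
        = Measure.map (fun ω (i : Fin n) => Θ (t i) ω) P)
    (μB : Set S → Ω → ℝ)
    (hμB : ∀ (B : Set S) (ω : Ω),
      μB B ω = ∫ t in (0:ℝ)..1, Set.indicator B (fun _ => (1:ℝ)) (Θ t ω)) :
    ∀ B : Set S, MeasurableSet B →
      P[Set.indicator {ω | Θ 1 ω ∈ B} (fun _ => (1:ℝ))
          | MeasurableSpace.comap (μB B) inferInstance]
        =ᵐ[P] μB B := by
  intro B hB
  have hg : Measurable (B.indicator fun _ => (1 : ℝ)) := measurable_const.indicator hB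
  have hμB_eq : μB B = timeAverage (fun t ω => B.indicator (fun _ => 1) (Θ t ω)) 1 :=
    (funext (hμB B)).trans (timeAverage_one _).symm
  rw [hμB_eq]
  exact statement1_general (IsZeroSelfSimilar.comp hss (fun _ => hΘ.of_uncurry_left) hg)
    (hg.comp hΘ) fun _ _ => (norm_indicator_le_norm_self _ _).trans_eq norm_one
end

section
/- Let F be a probability distribution on [0, ∞) admitting a density with respect to Lebesgue measure. Then the following are equivalent: (i) for every probability space and every jointly measurable stationary real-valued process (Y_t : t ∈ ℝ) with E|Y_0| < ∞, setting Ȳ_F := ∫₀^∞ Y_t dF(t), one has E(Y_0 | σ(Ȳ_F)) = Ȳ_F almost surely; (ii) F is the exponential distribution with density λ e^{−λt} on (0, ∞) for some λ ∈ (0, ∞). -/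
open MeasureTheory ProbabilityTheory

open Filter Topology

/-!
Write `φ` for the characteristic function of `F` and `X` for the average of `Y` against `F`.

If averages are conditional expectations, then `E[X² (Y₀ - X)] = 0`. Polarize this identity and
test it on three characters of the two-dimensional torus with product `1`, evaluated along a
translation flow with frequencies `a` and `b`. The outcome is that `g = 1 / φ - 1` satisfies
`g a + g b + g (-(a + b)) = 0`, so `g` is additive and continuous, hence linear, and
`φ x = (1 - i k x)⁻¹`.

Conversely, if `F` is the exponential distribution of rate `1`, the moving average
`X t = ∫ s, Y (s + t) ∂F` solves `X' = X - Y`. The law of `(X t, Y t)` does not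
depend on `t`: by the law of large numbers, `X t` is an almost sure limit of means
`n⁻¹ ∑ i < n, Y (sᵢ + t)` at fixed times `sᵢ`. Hence `E[ψ(X₀) (X₀ - Y₀)] = E[Ψ(X₁) - Ψ(X₀)] = 0` for
bounded continuous `ψ` with primitive `Ψ`, that is, `E[X₀ - Y₀ | X₀] = 0`. Other scales follow by a
linear change of time.
-/

/-- Strict stationarity of a process: its finite-dimensional distributions are invariant under
shifts of time. -/
def IsStrictlyStationary {Ω E : Type*} [MeasurableSpace Ω] [MeasurableSpace E] (P : Measure Ω)
    (Y : ℝ → Ω → E) : Prop :=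
  ∀ (h : ℝ) (n : ℕ) (t : Fin n → ℝ),
    P.map (fun ω i ↦ Y (t i + h) ω) = P.map (fun ω i ↦ Y (t i) ω)

namespace IsStrictlyStationary

variable {Ω E E' : Type*} [MeasurableSpace Ω] [MeasurableSpace E] [MeasurableSpace E']
  {P : Measure Ω} {Y : ℝ → Ω → E}

theorem identDistrib_pi (hY : IsStrictlyStationary P Y) (hm : ∀ t, Measurable (Y t)) (h : ℝ) {n : ℕ}
    (t : Fin n → ℝ) :
    IdentDistrib (fun ω i ↦ Y (t i + h) ω) (fun ω i ↦ Y (t i) ω) P P where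
  aemeasurable_fst := (measurable_pi_lambda _ fun i ↦ hm (t i + h)).aemeasurable
  aemeasurable_snd := (measurable_pi_lambda _ fun i ↦ hm (t i)).aemeasurable
  map_eq := hY h n t

theorem identDistrib (hY : IsStrictlyStationary P Y) (hm : ∀ t, Measurable (Y t)) (s t : ℝ) :
    IdentDistrib (Y s) (Y t) P P := by
  simpa [Function.comp_def] using
    (hY.identDistrib_pi hm (s - t) fun _ : Fin 1 ↦ t).comp (measurable_pi_apply 0)

theorem comp (hY : IsStrictlyStationary P Y) (hm : ∀ t, Measurable (Y t)) {g : E → E'}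
    (hg : Measurable g) : IsStrictlyStationary P fun t ω ↦ g (Y t ω) := fun h _ t ↦
  ((hY.identDistrib_pi hm h t).comp
    (measurable_pi_lambda _ fun i ↦ hg.comp (measurable_pi_apply i))).map_eq

theorem comp_mul_left (hY : IsStrictlyStationary P Y) (k : ℝ) :
    IsStrictlyStationary P fun t ↦ Y (k * t) :=
  fun h n t ↦ by simpa only [mul_add] using hY (k * h) n fun i ↦ k * t i

theorem of_measurePreserving_flow {T : ℝ → Ω → Ω} (hT : ∀ t, MeasurePreserving (T t) P P)
    (hadd : ∀ s t ω, T (s + t) ω = T s (T t ω)) {f : Ω → E} (hf : Measurable f) :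
    IsStrictlyStationary P fun t ω ↦ f (T t ω) := by
  intro h n t
  have hmeas : Measurable fun ω (i : Fin n) ↦ f (T (t i) ω) :=
    measurable_pi_lambda _ fun i ↦ hf.comp (hT (t i)).measurable
  simp only [hadd]
  conv_rhs => rw [← (hT h).map_eq, Measure.map_map hmeas (hT h).measurable]
  rfl

end IsStrictlyStationary

/-- The property of a distribution `F` characterised below: for every integrable, jointly
measurable, stationary real process `Y`, the weighted average `∫ t, Y t ∂F` coincides with the
conditional expectation of `Y 0` given that average. Sample spaces range over `Type` only. -/
def AverageIsCondExp (F : Measure ℝ) : Prop :=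
  ∀ (Ω : Type) (_ : MeasurableSpace Ω) (P : Measure Ω), IsProbabilityMeasure P →
    ∀ Y : ℝ → Ω → ℝ, (Measurable fun p : ℝ × Ω ↦ Y p.1 p.2) → IsStrictlyStationary P Y →
      Integrable (Y 0) P →
      ∀ YbarF : Ω → ℝ, (∀ ω, YbarF ω = ∫ t, Y t ω ∂F) →
        P[Y 0 | MeasurableSpace.comap YbarF inferInstance] =ᵐ[P] YbarF

section ConditionalExpectation

theorem measurable_average {S Ω E : Type*} [MeasurableSpace S] [MeasurableSpace Ω]
    [NormedAddCommGroup E] [NormedSpace ℝ E] [MeasurableSpace E] [BorelSpace E]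
    [SecondCountableTopology E] {ν : Measure S} [SFinite ν] {Y : S → Ω → E}
    (hY : Measurable fun p : S × Ω ↦ Y p.1 p.2) : Measurable fun ω ↦ ∫ s, Y s ω ∂ν :=
  hY.stronglyMeasurable.integral_prod_left.measurable

theorem integral_comp_smul_condExp_comap {Ω S E : Type*} [MeasurableSpace Ω] [MeasurableSpace S]
    [NormedAddCommGroup E] [NormedSpace ℝ E] [CompleteSpace E] {P : Measure Ω} [IsFiniteMeasure P]
    {X : Ω → S} {D : Ω → E} {φ : S → ℝ} (hX : Measurable X) (hD : Integrable D P)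
    (hφ : Measurable φ) (hint : Integrable (fun ω ↦ φ (X ω) • D ω) P) :
    ∫ ω, φ (X ω) • (P[D | MeasurableSpace.comap X inferInstance]) ω ∂P =
      ∫ ω, φ (X ω) • D ω ∂P := by
  have hφX : StronglyMeasurable[MeasurableSpace.comap X inferInstance] (φ ∘ X) :=
    (hφ.comp (comap_measurable X)).stronglyMeasurable
  conv_rhs => rw [← integral_condExp hX.comap_le]
  exact (integral_congr_ae
    (condExp_smul_of_aestronglyMeasurable_left hφX.aestronglyMeasurable hint hD)).symm

theorem condExp_comap_ae_eq_zero_of_integral_contDiff_smul_eq_zero {Ω V E : Type*}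
    [MeasurableSpace Ω] [NormedAddCommGroup V] [NormedSpace ℝ V] [FiniteDimensional ℝ V]
    [MeasurableSpace V] [BorelSpace V] [NormedAddCommGroup E] [NormedSpace ℝ E] [CompleteSpace E]
    {P : Measure Ω} [IsFiniteMeasure P] {X : Ω → V} {D : Ω → E} (hX : Measurable X)
    (hD : Integrable D P)
    (h : ∀ φ : V → ℝ, ContDiff ℝ (⊤ : ℕ∞) φ → HasCompactSupport φ → ∫ ω, φ (X ω) • D ω ∂P = 0) :
    P[D | MeasurableSpace.comap X inferInstance] =ᵐ[P] 0 := by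
  obtain ⟨m, hm, hDm⟩ := (stronglyMeasurable_condExp (μ := P) (f := D)
    (m := MeasurableSpace.comap X inferInstance)).exists_eq_measurable_comp
  have hmint : Integrable m (P.map X) := by
    rw [integrable_map_measure hm.aestronglyMeasurable hX.aemeasurable, ← hDm]
    exact integrable_condExp
  have hm_zero : ∀ᵐ v ∂P.map X, m v = 0 := by
    refine ae_eq_zero_of_integral_contDiff_smul_eq_zero hmint.locallyIntegrable
      fun φ hφ hφ_supp ↦ ?_
    obtain ⟨C, hC⟩ := hφ_supp.exists_bound_of_continuous hφ.continuous
    have hφD : Integrable (fun ω ↦ φ (X ω) • D ω) P :=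
      hD.bdd_smul C (hφ.continuous.measurable.comp hX).aestronglyMeasurable
        (.of_forall fun ω ↦ hC (X ω))
    have hφm : AEStronglyMeasurable (fun v ↦ φ v • m v) (P.map X) :=
      hφ.continuous.aestronglyMeasurable.smul hm.aestronglyMeasurable
    rw [integral_map hX.aemeasurable hφm]
    have hpull := integral_comp_smul_condExp_comap hX hD hφ.continuous.measurable hφD
    rwa [hDm, h φ hφ hφ_supp] at hpull
  rw [hDm]
  exact ae_of_ae_map hX.aemeasurable hm_zero

end ConditionalExpectation

section CubicIdentity

-- The four real functionals on the right reduce the cubic identity for complex processes to the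
-- one for real processes.
theorem sq_mul_eq_sum_reCLM_imCLM (w d : ℂ) :
    w ^ 2 * d = ∑ j, ![2, -2 * Complex.I, -(1 - Complex.I) / 2, -(1 + Complex.I) / 2] j *
      ((fun L : ℂ →L[ℝ] ℝ ↦ ((L w ^ 2 * L d : ℝ) : ℂ)) (![Complex.reCLM, Complex.imCLM,
        Complex.reCLM + Complex.imCLM, Complex.reCLM - Complex.imCLM] j)) := by
  nth_rw 1 [← Complex.re_add_im w, ← Complex.re_add_im d]
  simp only [Fin.sum_univ_four, Matrix.cons_val, add_apply, _root_.sub_apply, Complex.reCLM_apply,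
    Complex.imCLM_apply, Complex.ofReal_mul, Complex.ofReal_pow, Complex.ofReal_add,
    Complex.ofReal_sub]
  linear_combination (w.im ^ 2 * d.re + 2 * w.re * w.im * d.im
    + w.im ^ 2 * d.im * Complex.I : ℂ) * Complex.I_sq

theorem integral_sq_mul_eq_zero_of_forall_clm {Ω : Type*} [MeasurableSpace Ω] {P : Measure Ω}
    {w d : Ω → ℂ} (hint : ∀ L : ℂ →L[ℝ] ℝ, Integrable (fun ω ↦ L (w ω) ^ 2 * L (d ω)) P)
    (hzero : ∀ L : ℂ →L[ℝ] ℝ, ∫ ω, L (w ω) ^ 2 * L (d ω) ∂P = 0) :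
    Integrable (fun ω ↦ w ω ^ 2 * d ω) P ∧ ∫ ω, w ω ^ 2 * d ω ∂P = 0 := by
  simp only [sq_mul_eq_sum_reCLM_imCLM]
  refine ⟨integrable_finsetSum _ fun j _ ↦ (hint _).ofReal.const_mul _, ?_⟩
  rw [integral_finsetSum _ fun j _ ↦ (hint _).ofReal.const_mul _]
  refine Finset.sum_eq_zero fun j _ ↦ ?_
  rw [integral_const_mul]
  refine mul_eq_zero_of_right _ ?_
  rw [integral_complex_ofReal, hzero, Complex.ofReal_zero]

-- Polarization: inclusion-exclusion over the subsets `S` keeps only the trilinear terms in which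
-- each of the three indices occurs once.
theorem sum_sign_mul_sq_mul_sum_eq {R : Type*} [CommRing R] (x y : Fin 3 → R) :
    ∑ S : Finset (Fin 3), -(-1) ^ S.card * ((∑ i ∈ S, x i) ^ 2 * ∑ i ∈ S, y i) =
      2 * (x 0 * x 1 * y 2 + x 0 * x 2 * y 1 + x 1 * x 2 * y 0) := by
  have huniv : (Finset.univ : Finset (Finset (Fin 3))) =
      {∅, {0}, {1}, {2}, {0, 1}, {0, 2}, {1, 2}, {0, 1, 2}} := by decide
  rw [huniv]
  repeat rw [Finset.sum_insert (by decide)]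
  have hpair {i j : Fin 3} (hij : i ≠ j) : ({i, j} : Finset (Fin 3)).card = 2 :=
    Finset.card_pair hij
  have htriple : ({0, 1, 2} : Finset (Fin 3)).card = 3 := rfl
  simp only [Finset.sum_empty, Finset.sum_singleton, Finset.card_empty, Finset.card_singleton,
    hpair, htriple, Finset.sum_insert, Finset.mem_insert, Finset.mem_singleton, ne_eq, zero_ne_one,
    Fin.reduceEq, Fin.isValue, or_self, not_false_eq_true]
  ring

variable {Ω : Type} [MeasurableSpace Ω] {P : Measure Ω} [IsProbabilityMeasure P]
  {F : Measure ℝ} [IsProbabilityMeasure F]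

theorem AverageIsCondExp.integral_sq_mul_sub_eq_zero (hF : AverageIsCondExp F) {Y : ℝ → Ω → ℝ}
    (hm : Measurable fun p : ℝ × Ω ↦ Y p.1 p.2) (hY : IsStrictlyStationary P Y) {C : ℝ}
    (hC : ∀ t ω, ‖Y t ω‖ ≤ C) :
    Integrable (fun ω ↦ (∫ t, Y t ω ∂F) ^ 2 * (Y 0 ω - ∫ t, Y t ω ∂F)) P ∧
      ∫ ω, (∫ t, Y t ω ∂F) ^ 2 * (Y 0 ω - ∫ t, Y t ω ∂F) ∂P = 0 := by
  set X : Ω → ℝ := fun ω ↦ ∫ t, Y t ω ∂F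
  have hX : Measurable X := measurable_average hm
  have hXC (ω : Ω) : ‖X ω‖ ≤ C := by
    simpa using norm_integral_le_of_norm_le_const (.of_forall fun t ↦ hC t ω) (μ := F)
  have hYint : Integrable (Y 0) P :=
    .of_bound hm.of_uncurry_left.aestronglyMeasurable C (.of_forall (hC 0))
  have hXint : Integrable X P := .of_bound hX.aestronglyMeasurable C (.of_forall hXC)
  have hsq_mul {D : Ω → ℝ} (hD : Integrable D P) : Integrable (fun ω ↦ X ω ^ 2 * D ω) P :=
    hD.bdd_mul (c := C ^ 2) (hX.pow_const 2).aestronglyMeasurable (.of_forall fun ω ↦ by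
      rw [norm_pow]; gcongr; exact hXC ω)
  refine ⟨hsq_mul (hYint.sub hXint), ?_⟩
  simp only [mul_sub]
  rw [integral_sub (hsq_mul hYint) (hsq_mul hXint), sub_eq_zero]
  calc ∫ ω, X ω ^ 2 * Y 0 ω ∂P
      = ∫ ω, X ω ^ 2 * (P[Y 0 | MeasurableSpace.comap X inferInstance]) ω ∂P :=
        (integral_comp_smul_condExp_comap (φ := (· ^ 2)) hX hYint (measurable_id.pow_const 2)
          (hsq_mul hYint)).symm
    _ = ∫ ω, X ω ^ 2 * X ω ∂P := by
        refine integral_congr_ae ?_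
        filter_upwards [hF Ω _ P inferInstance Y hm hY hYint X fun _ ↦ rfl] with ω hω
        rw [hω]

theorem AverageIsCondExp.integral_sq_mul_sub_eq_zero_complex (hF : AverageIsCondExp F)
    {Z : ℝ → Ω → ℂ} (hm : Measurable fun p : ℝ × Ω ↦ Z p.1 p.2) (hZ : IsStrictlyStationary P Z)
    {C : ℝ} (hC : ∀ t ω, ‖Z t ω‖ ≤ C) :
    Integrable (fun ω ↦ (∫ t, Z t ω ∂F) ^ 2 * (Z 0 ω - ∫ t, Z t ω ∂F)) P ∧
      ∫ ω, (∫ t, Z t ω ∂F) ^ 2 * (Z 0 ω - ∫ t, Z t ω ∂F) ∂P = 0 := by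
  have havg (L : ℂ →L[ℝ] ℝ) (ω : Ω) : L (∫ t, Z t ω ∂F) = ∫ t, L (Z t ω) ∂F :=
    (L.integral_comp_comm (.of_bound hm.of_uncurry_right.aestronglyMeasurable C
      (.of_forall fun t ↦ hC t ω))).symm
  have hLC (L : ℂ →L[ℝ] ℝ) (t : ℝ) (ω : Ω) : ‖L (Z t ω)‖ ≤ ‖L‖ * C :=
    L.le_opNorm_of_le (hC t ω)
  have hLm (L : ℂ →L[ℝ] ℝ) : Measurable fun p : ℝ × Ω ↦ L (Z p.1 p.2) := L.measurable.comp hm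
  have h := fun L : ℂ →L[ℝ] ℝ ↦ hF.integral_sq_mul_sub_eq_zero (hLm L)
    (hZ.comp (fun t ↦ hm.of_uncurry_left) L.measurable) (hLC L)
  refine integral_sq_mul_eq_zero_of_forall_clm (fun L ↦ ?_) fun L ↦ ?_
  all_goals simp only [map_sub, havg]
  exacts [(h L).1, (h L).2]

theorem AverageIsCondExp.integral_polarized_eq_zero (hF : AverageIsCondExp F)
    {Z : Fin 3 → ℝ → Ω → ℂ} (hm : ∀ i, Measurable fun p : ℝ × Ω ↦ Z i p.1 p.2)
    (hZ : ∀ S : Finset (Fin 3), IsStrictlyStationary P fun t ω ↦ ∑ i ∈ S, Z i t ω)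
    {C : ℝ} (hC : ∀ i t ω, ‖Z i t ω‖ ≤ C) {X D : Fin 3 → Ω → ℂ}
    (hX : ∀ i ω, ∫ t, Z i t ω ∂F = X i ω) (hD : ∀ i ω, Z i 0 ω - X i ω = D i ω) :
    ∫ ω, (X 0 ω * X 1 ω * D 2 ω + X 0 ω * X 2 ω * D 1 ω + X 1 ω * X 2 ω * D 0 ω) ∂P = 0 := by
  have hint (i : Fin 3) (ω : Ω) : Integrable (fun t ↦ Z i t ω) F :=
    .of_bound (hm i).of_uncurry_right.aestronglyMeasurable C (.of_forall fun t ↦ hC i t ω)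
  have hsum (S : Finset (Fin 3)) :
      Integrable (fun ω ↦ (∑ i ∈ S, X i ω) ^ 2 * ∑ i ∈ S, D i ω) P ∧
        ∫ ω, (∑ i ∈ S, X i ω) ^ 2 * ∑ i ∈ S, D i ω ∂P = 0 := by
    have h := hF.integral_sq_mul_sub_eq_zero_complex
      (Finset.measurable_fun_sum S fun i _ ↦ hm i) (hZ S) fun t ω ↦
        norm_sum_le_of_le S fun i _ ↦ hC i t ω
    simpa only [integral_finsetSum S fun i _ ↦ hint i _, hX, ← Finset.sum_sub_distrib, hD] using h
  have hzero :
      ∫ ω, 2 * (X 0 ω * X 1 ω * D 2 ω + X 0 ω * X 2 ω * D 1 ω + X 1 ω * X 2 ω * D 0 ω) ∂P = 0 := by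
    have hpolar (ω : Ω) := sum_sign_mul_sq_mul_sum_eq (fun i ↦ X i ω) fun i ↦ D i ω
    simp only [← hpolar]
    rw [integral_finsetSum _ fun S _ ↦ (hsum S).1.const_mul _]
    exact Finset.sum_eq_zero fun S _ ↦ by rw [integral_const_mul, (hsum S).2, mul_zero]
  rw [integral_const_mul] at hzero
  exact (mul_eq_zero.1 hzero).resolve_left two_ne_zero

end CubicIdentity

section Torus

/-- The translation flow on the two-dimensional torus along which the coordinates rotate with
angular frequencies `a` and `b`. -/
noncomputable def torusFlow (a b t : ℝ) (ω : UnitAddCircle × UnitAddCircle) :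
    UnitAddCircle × UnitAddCircle :=
  ω + (((a * t / (2 * Real.pi) : ℝ) : UnitAddCircle),
    ((b * t / (2 * Real.pi) : ℝ) : UnitAddCircle))

theorem measurePreserving_torusFlow (a b t : ℝ) : MeasurePreserving (torusFlow a b t) :=
  (measurePreserving_add_right volume _).prod (measurePreserving_add_right volume _)

theorem torusFlow_add (a b s t : ℝ) (ω : UnitAddCircle × UnitAddCircle) :
    torusFlow a b (s + t) ω = torusFlow a b s (torusFlow a b t ω) := by
  simp only [torusFlow, mul_add, add_div, AddCircle.coe_add, ← Prod.mk_add_mk]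
  abel

/-- Three characters of the two-dimensional torus whose product is `1`. -/
noncomputable def torusCharacter (i : Fin 3) (ω : UnitAddCircle × UnitAddCircle) : ℂ :=
  (![ω.1, ω.2, -(ω.1 + ω.2)] i).toCircle

theorem continuous_torusCharacter (i : Fin 3) : Continuous (torusCharacter i) := by
  have : Continuous fun ω : UnitAddCircle × UnitAddCircle ↦ ![ω.1, ω.2, -(ω.1 + ω.2)] i := by
    fin_cases i
    exacts [continuous_fst, continuous_snd, (continuous_fst.add continuous_snd).neg]
  exact continuous_subtype_val.comp (AddCircle.continuous_toCircle.comp this)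

theorem norm_torusCharacter (i : Fin 3) (ω : UnitAddCircle × UnitAddCircle) :
    ‖torusCharacter i ω‖ = 1 :=
  Circle.norm_coe _

theorem prod_torusCharacter (ω : UnitAddCircle × UnitAddCircle) :
    torusCharacter 0 ω * torusCharacter 1 ω * torusCharacter 2 ω = 1 := by
  simp only [torusCharacter, ← Circle.coe_mul, ← AddCircle.toCircle_add, Matrix.cons_val,
    add_neg_cancel, AddCircle.toCircle_zero, Circle.coe_one]

theorem torusCharacter_torusFlow (a b t : ℝ) (i : Fin 3) (ω : UnitAddCircle × UnitAddCircle) :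
    torusCharacter i (torusFlow a b t ω) =
      torusCharacter i ω * Complex.exp ((![a, b, -(a + b)] i : ℝ) * t * Complex.I) := by
  have hrot (θ : UnitAddCircle) (x : ℝ) :
      ((θ + ((x / (2 * Real.pi) : ℝ) : UnitAddCircle)).toCircle : ℂ) =
        θ.toCircle * Complex.exp (x * Complex.I) := by
    rw [AddCircle.toCircle_add, AddCircle.toCircle_apply_mk, Circle.coe_mul, Circle.coe_exp,
      div_one, mul_div_cancel₀ x Real.two_pi_pos.ne']
  have hcoord : ![(torusFlow a b t ω).1, (torusFlow a b t ω).2,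
      -((torusFlow a b t ω).1 + (torusFlow a b t ω).2)] i = ![ω.1, ω.2, -(ω.1 + ω.2)] i +
        ((![a, b, -(a + b)] i * t / (2 * Real.pi) : ℝ) : UnitAddCircle) := by
    fin_cases i
    · rfl
    · rfl
    · simp only [torusFlow, Prod.fst_add, Prod.snd_add, neg_add_rev, Fin.reduceFinMk,
        Matrix.cons_val, add_mul, neg_mul, add_div, neg_div, AddCircle.coe_add, AddCircle.coe_neg]
      abel
  rw [torusCharacter, hcoord, hrot, torusCharacter]
  push_cast
  rfl

theorem integral_mul_cexp_eq_mul_charFun (μ : Measure ℝ) (z : ℂ) (a : ℝ) :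
    ∫ t : ℝ, z * Complex.exp (a * t * Complex.I) ∂μ = z * charFun μ a := by
  rw [integral_const_mul, charFun_apply_real]

theorem AverageIsCondExp.charFun_eq {F : Measure ℝ} [IsProbabilityMeasure F]
    (hF : AverageIsCondExp F) (a b : ℝ) :
    charFun F a * charFun F b + charFun F a * charFun F (-(a + b))
      + charFun F b * charFun F (-(a + b)) =
      3 * (charFun F a * charFun F b * charFun F (-(a + b))) := by
  let Z (i : Fin 3) (t : ℝ) (ω : UnitAddCircle × UnitAddCircle) : ℂ :=
    torusCharacter i (torusFlow a b t ω)
  have hm (i : Fin 3) : Measurable fun p : ℝ × UnitAddCircle × UnitAddCircle ↦ Z i p.1 p.2 := by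
    have := (continuous_torusCharacter i).measurable
    simp only [Z, torusCharacter_torusFlow]
    fun_prop
  have hZ (S : Finset (Fin 3)) : IsStrictlyStationary volume fun t ω ↦ ∑ i ∈ S, Z i t ω :=
    .of_measurePreserving_flow (measurePreserving_torusFlow a b) (torusFlow_add a b)
      (Finset.measurable_fun_sum S fun i _ ↦ (continuous_torusCharacter i).measurable)
  have hX (i : Fin 3) (ω : UnitAddCircle × UnitAddCircle) : ∫ t, Z i t ω ∂F =
      torusCharacter i ω * charFun F (![a, b, -(a + b)] i) := by
    simp only [Z, torusCharacter_torusFlow, integral_mul_cexp_eq_mul_charFun]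
  have : IsProbabilityMeasure (volume : Measure UnitAddCircle) := ⟨UnitAddCircle.measure_univ⟩
  have : IsProbabilityMeasure (volume : Measure (UnitAddCircle × UnitAddCircle)) :=
    inferInstanceAs (IsProbabilityMeasure (volume.prod volume))
  have hD (i : Fin 3) (ω : UnitAddCircle × UnitAddCircle) :
      Z i 0 ω - torusCharacter i ω * charFun F (![a, b, -(a + b)] i) =
        torusCharacter i ω * (1 - charFun F (![a, b, -(a + b)] i)) := by
    simp [Z, torusCharacter_torusFlow, mul_sub]
  have h := hF.integral_polarized_eq_zero hm hZ (fun i t ω ↦ (norm_torusCharacter i _).le) hX hD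
  have hconst (ω : UnitAddCircle × UnitAddCircle) (A B C : ℂ) :
      torusCharacter 0 ω * A * (torusCharacter 1 ω * B) * (torusCharacter 2 ω * (1 - C))
        + torusCharacter 0 ω * A * (torusCharacter 2 ω * C) * (torusCharacter 1 ω * (1 - B))
        + torusCharacter 1 ω * B * (torusCharacter 2 ω * C) * (torusCharacter 0 ω * (1 - A)) =
      A * B + A * C + B * C - 3 * (A * B * C) := by
    linear_combination (A * B + A * C + B * C - 3 * (A * B * C)) * prod_torusCharacter ω
  simp only [hconst, integral_const, probReal_univ, one_smul] at h
  exact sub_eq_zero.1 h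

end Torus

section FunctionalEquation

variable {f : ℝ → ℂ}

theorem ne_zero_of_pairwise_mul_eq (hf : Continuous f) (h0 : f 0 ≠ 0)
    (heq : ∀ a b, f a * f b + f a * f (-(a + b)) + f b * f (-(a + b)) =
      3 * (f a * f b * f (-(a + b)))) (x : ℝ) : f x ≠ 0 := by
  intro hx
  -- At `a = b = -y / 2` the equation reduces to `f a ^ 2 = 0`, so zeros accumulate at `0`.
  have hhalf {y : ℝ} (hy : f y = 0) : f (-2⁻¹ * y) = 0 := by
    have h := heq (-2⁻¹ * y) (-2⁻¹ * y)
    rw [show -(-2⁻¹ * y + -2⁻¹ * y) = y by ring, hy] at h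
    simpa using h
  have hzero (n : ℕ) : f ((-2⁻¹) ^ n * x) = 0 := by
    induction n with
    | zero => simpa using hx
    | succ n ih => rw [pow_succ', mul_assoc]; exact hhalf ih
  have hlim : Tendsto (fun n : ℕ ↦ (-2⁻¹ : ℝ) ^ n * x) atTop (𝓝 0) := by
    simpa using (tendsto_pow_atTop_nhds_zero_of_abs_lt_one
      (by norm_num [abs_of_neg] : |(-2⁻¹ : ℝ)| < 1)).mul_const x
  have hcont := (hf.tendsto 0).comp hlim
  simp only [Function.comp_def, hzero] at hcont
  exact h0 (tendsto_nhds_unique hcont tendsto_const_nhds)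

theorem exists_eq_inv_one_add_mul (hf : Continuous f) (h0 : f 0 ≠ 0)
    (heq : ∀ a b, f a * f b + f a * f (-(a + b)) + f b * f (-(a + b)) =
      3 * (f a * f b * f (-(a + b)))) :
    ∃ c : ℂ, ∀ x : ℝ, f x = (1 + x * c)⁻¹ := by
  have hne := ne_zero_of_pairwise_mul_eq hf h0 heq
  let g (x : ℝ) : ℂ := (f x)⁻¹ - 1
  have hsum (a b : ℝ) : g a + g b + g (-(a + b)) = 0 := by
    have := hne a
    have := hne b
    have := hne (-(a + b))
    simp only [g]
    field_simp
    linear_combination heq a b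
  have hg0 : g 0 = 0 := by
    have h := hsum 0 0
    simp only [add_zero, neg_zero] at h
    linear_combination h / 3
  have hneg (a : ℝ) : g (-a) = -g a := by
    have h := hsum a 0
    rw [add_zero, hg0] at h
    linear_combination h
  let G : ℝ →+ ℂ := ⟨⟨g, hg0⟩, fun a b ↦ by linear_combination hneg (a + b) - hsum a b⟩
  have hG : Continuous G := (hf.inv₀ hne).sub continuous_const
  refine ⟨g 1, fun x ↦ ?_⟩
  have hlin : g x = x * g 1 := by simpa [G] using map_real_smul G hG x 1
  rw [← hlin, add_sub_cancel, inv_inv]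

end FunctionalEquation

theorem exists_charFun_eq_inv_one_sub {F : Measure ℝ} [IsProbabilityMeasure F]
    (heq : ∀ a b, charFun F a * charFun F b + charFun F a * charFun F (-(a + b))
      + charFun F b * charFun F (-(a + b)) =
        3 * (charFun F a * charFun F b * charFun F (-(a + b)))) :
    ∃ k : ℝ, ∀ x, charFun F x = (1 - (k * x : ℝ) * Complex.I)⁻¹ := by
  obtain ⟨c, hc⟩ := exists_eq_inv_one_add_mul continuous_charFun (by simp) heq
  have hre : c.re = 0 := by
    have h := charFun_neg (μ := F) 1
    rw [hc, hc, map_inv₀, inv_inj] at h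
    exact neg_eq_self.1 (by simpa using congrArg Complex.re h)
  have hc_im : c = c.im * Complex.I := by simpa [hre] using (Complex.re_add_im c).symm
  refine ⟨-c.im, fun x ↦ (hc x).trans (congrArg _ ?_)⟩
  push_cast
  linear_combination (x : ℂ) * hc_im

section Exponential

theorem expMeasure_eq_withDensity_indicator {r : ℝ} :
    expMeasure r = volume.withDensity
      (Set.indicator (Set.Ioi 0) fun t ↦ ENNReal.ofReal (r * Real.exp (-(r * t)))) := by
  refine withDensity_congr_ae ?_
  filter_upwards [Measure.ae_ne volume 0] with t ht
  change exponentialPDF r t = _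
  rcases ht.lt_or_gt with h | h
  · rw [exponentialPDF_of_neg h, Set.indicator_of_notMem (Set.notMem_Ioi.2 h.le)]
  · rw [exponentialPDF_of_nonneg h.le, Set.indicator_of_mem (Set.mem_Ioi.2 h)]

theorem expMeasure_eq_withDensity_restrict (r : ℝ) :
    expMeasure r = (volume.restrict (Set.Ioi 0)).withDensity
      fun t ↦ ENNReal.ofReal (r * Real.exp (-(r * t))) := by
  rw [expMeasure_eq_withDensity_indicator, withDensity_indicator measurableSet_Ioi]

theorem integral_expMeasure {E : Type*} [NormedAddCommGroup E] [NormedSpace ℝ E] {r : ℝ}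
    (hr : 0 ≤ r) (g : ℝ → E) :
    ∫ t, g t ∂expMeasure r = ∫ t in Set.Ioi 0, (r * Real.exp (-(r * t))) • g t := by
  rw [expMeasure_eq_withDensity_restrict, integral_withDensity_eq_integral_toReal_smul
    (by fun_prop) (.of_forall fun _ ↦ ENNReal.ofReal_lt_top)]
  simp only [ENNReal.toReal_ofReal (mul_nonneg hr (Real.exp_pos _).le)]

theorem integrable_expMeasure_iff {E : Type*} [NormedAddCommGroup E] [NormedSpace ℝ E] {r : ℝ}
    (hr : 0 ≤ r) {g : ℝ → E} :
    Integrable g (expMeasure r) ↔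
      IntegrableOn (fun t ↦ (r * Real.exp (-(r * t))) • g t) (Set.Ioi 0) := by
  rw [expMeasure_eq_withDensity_restrict, integrable_withDensity_iff_integrable_smul'
    (by fun_prop) (.of_forall fun _ ↦ ENNReal.ofReal_lt_top)]
  simp only [ENNReal.toReal_ofReal (mul_nonneg hr (Real.exp_pos _).le), IntegrableOn]

theorem charFun_expMeasure {r : ℝ} (hr : 0 < r) (x : ℝ) :
    charFun (expMeasure r) x = (1 - (r⁻¹ * x : ℝ) * Complex.I)⁻¹ := by
  have hr' : (r : ℂ) ≠ 0 := Complex.ofReal_ne_zero.2 hr.ne'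
  have hdenom : -(r : ℂ) + x * Complex.I ≠ 0 := fun h ↦ by
    simpa [hr.ne'] using congrArg Complex.re h
  have hexp (t : ℝ) : (r * Real.exp (-(r * t))) • Complex.exp (x * t * Complex.I) =
      r * Complex.exp ((-r + x * Complex.I) * t) := by
    rw [Complex.real_smul, Complex.ofReal_mul, Complex.ofReal_exp, mul_assoc, ← Complex.exp_add]
    push_cast
    ring_nf
  simp only [charFun_apply_real, integral_expMeasure hr.le, hexp]
  rw [integral_const_mul, integral_exp_mul_complex_Ioi (by simpa using hr)]
  refine eq_inv_of_mul_eq_one_left ?_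
  push_cast
  rw [mul_zero, Complex.exp_zero]
  field_simp
  ring

theorem charFun_map_mul_expMeasure_one (k x : ℝ) :
    charFun ((expMeasure 1).map (k * ·)) x = (1 - (k * x : ℝ) * Complex.I)⁻¹ := by
  rw [charFun_map_mul, charFun_expMeasure one_pos, inv_one, one_mul]

theorem expMeasure_eq_map_mul {r : ℝ} (hr : 0 < r) :
    expMeasure r = (expMeasure 1).map (r⁻¹ * ·) := by
  have := isProbabilityMeasure_expMeasure hr
  have := isProbabilityMeasure_expMeasure one_pos
  exact Measure.ext_of_charFun (funext fun x ↦ by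
    rw [charFun_expMeasure hr, charFun_map_mul_expMeasure_one])

theorem ae_pos_expMeasure (r : ℝ) : ∀ᵐ t ∂expMeasure r, 0 < t := by
  rw [expMeasure_eq_withDensity_restrict]
  exact (withDensity_absolutelyContinuous _ _).ae_le (ae_restrict_mem measurableSet_Ioi)

theorem exists_eq_map_mul_expMeasure_one_iff {F : Measure ℝ} (hF : ∀ᵐ t ∂F, 0 < t) :
    (∃ k : ℝ, F = (expMeasure 1).map (k * ·)) ↔ ∃ r, 0 < r ∧ F = expMeasure r := by
  have := isProbabilityMeasure_expMeasure one_pos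
  refine ⟨?_, fun ⟨r, hr, h⟩ ↦ ⟨r⁻¹, h.trans (expMeasure_eq_map_mul hr)⟩⟩
  rintro ⟨k, rfl⟩
  obtain ⟨t, hkt, ht⟩ := ((ae_of_ae_map (by fun_prop) hF).and (ae_pos_expMeasure 1)).exists
  have hk : 0 < k := pos_of_mul_pos_left hkt ht.le
  exact ⟨k⁻¹, inv_pos.2 hk, by rw [expMeasure_eq_map_mul (inv_pos.2 hk), inv_inv]⟩

theorem ae_pos_of_eq_withDensity_indicator_Ici {F : Measure ℝ} {f : ℝ → ℝ}
    (hF : F = volume.withDensity fun x ↦ ENNReal.ofReal ((Set.Ici 0).indicator f x)) :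
    ∀ᵐ t ∂F, 0 < t := by
  have hind : (fun x ↦ ENNReal.ofReal ((Set.Ici 0).indicator f x)) =
      (Set.Ici 0).indicator (ENNReal.ofReal ∘ f) :=
    (Set.indicator_comp_of_zero ENNReal.ofReal_zero).symm
  rw [hF, hind, withDensity_indicator measurableSet_Ici, ← restrict_Ioi_eq_restrict_Ici]
  exact (withDensity_absolutelyContinuous _ _).ae_le (ae_restrict_mem measurableSet_Ioi)

end Exponential

section MovingAverage

theorem identDistrib_of_tendsto {Ω Ω' E : Type*} [MeasurableSpace Ω] [MeasurableSpace Ω']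
    {P : Measure Ω} [IsProbabilityMeasure P] {P' : Measure Ω'} [IsProbabilityMeasure P']
    [TopologicalSpace E] [HasOuterApproxClosed E] [MeasurableSpace E] [BorelSpace E]
    {X : ℕ → Ω → E} {X' : ℕ → Ω' → E} {Z : Ω → E} {Z' : Ω' → E}
    (hXX' : ∀ n, IdentDistrib (X n) (X' n) P P') (hZ : AEMeasurable Z P)
    (hZ' : AEMeasurable Z' P') (hX : ∀ᵐ ω ∂P, Tendsto (fun n ↦ X n ω) atTop (𝓝 (Z ω)))
    (hX' : ∀ᵐ ω ∂P', Tendsto (fun n ↦ X' n ω) atTop (𝓝 (Z' ω))) : IdentDistrib Z Z' P P' where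
  aemeasurable_fst := hZ
  aemeasurable_snd := hZ'
  map_eq := by
    have h := tendstoInDistribution_of_ae_tendsto (fun n ↦ (hXX' n).aemeasurable_fst) hZ hX
    have h' := tendstoInDistribution_of_ae_tendsto (fun n ↦ (hXX' n).aemeasurable_snd) hZ' hX'
    refine tendstoInDistribution_unique X h ⟨fun n ↦ (hXX' n).aemeasurable_fst, hZ', ?_⟩
    exact h'.tendsto.congr fun n ↦ Subtype.ext (hXX' n).map_eq.symm

theorem ae_tendsto_sampleMean {S E : Type*} [MeasurableSpace S] {ν : Measure S}
    [IsProbabilityMeasure ν] [NormedAddCommGroup E] [NormedSpace ℝ E] [CompleteSpace E]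
    [MeasurableSpace E] [BorelSpace E] {g : S → E} (hg : Measurable g) (hint : Integrable g ν) :
    ∀ᵐ s ∂Measure.infinitePi fun _ : ℕ ↦ ν,
      Tendsto (fun n : ℕ ↦ (n : ℝ)⁻¹ • ∑ i ∈ Finset.range n, g (s i)) atTop (𝓝 (∫ x, g x ∂ν)) := by
  have heval (i : ℕ) : IdentDistrib (fun s : ℕ → S ↦ s i) id (Measure.infinitePi fun _ ↦ ν) ν :=
    ⟨(measurable_pi_apply i).aemeasurable, aemeasurable_id, by
      rw [(measurePreserving_eval_infinitePi (fun _ ↦ ν) i).map_eq, Measure.map_id]⟩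
  have hindep : iIndepFun (fun (i : ℕ) (s : ℕ → S) ↦ g (s i)) (Measure.infinitePi fun _ ↦ ν) :=
    iIndepFun_infinitePi fun _ ↦ hg
  have hdistrib (i : ℕ) : IdentDistrib (fun s : ℕ → S ↦ g (s i)) g
      (Measure.infinitePi fun _ ↦ ν) ν := (heval i).comp hg
  have hslln := strong_law_ae (fun i (s : ℕ → S) ↦ g (s i)) ((hdistrib 0).integrable_iff.2 hint)
    (fun i j hij ↦ hindep.indepFun hij) fun i ↦ (hdistrib i).trans (hdistrib 0).symm
  rwa [(hdistrib 0).integral_eq] at hslln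

theorem integrable_prod_of_identDistrib {S Ω Ω' E : Type*} [MeasurableSpace S] [MeasurableSpace Ω]
    [MeasurableSpace Ω'] {ν : Measure S} [IsFiniteMeasure ν] {P : Measure Ω} [SFinite P]
    {P' : Measure Ω'} [NormedAddCommGroup E] [MeasurableSpace E] [BorelSpace E]
    [SecondCountableTopology E] {Z : S → Ω → E} {Z' : Ω' → E}
    (hZ : Measurable fun p : S × Ω ↦ Z p.1 p.2)
    (hdistrib : ∀ s, IdentDistrib (Z s) Z' P P') (hint : Integrable Z' P') :
    Integrable (fun p : S × Ω ↦ Z p.1 p.2) (ν.prod P) := by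
  rw [integrable_prod_iff hZ.aestronglyMeasurable]
  refine ⟨.of_forall fun s ↦ (hdistrib s).integrable_iff.2 hint, ?_⟩
  have hnorm (s : S) : ∫ ω, ‖Z s ω‖ ∂P = ∫ ω, ‖Z' ω‖ ∂P' := (hdistrib s).norm.integral_eq
  simp only [hnorm, integrable_const]

variable {Ω E : Type*} [MeasurableSpace Ω] [NormedAddCommGroup E]
  [MeasurableSpace E] [BorelSpace E] [SecondCountableTopology E] {P : Measure Ω}
  {F : Measure ℝ} {Y : ℝ → Ω → E}

theorem IsStrictlyStationary.integrable_prod [SFinite P] [IsFiniteMeasure F]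
    (hY : IsStrictlyStationary P Y)
    (hm : Measurable fun p : ℝ × Ω ↦ Y p.1 p.2) (hint : Integrable (Y 0) P) (t : ℝ) :
    Integrable (fun p : ℝ × Ω ↦ Y (p.1 + t) p.2) (F.prod P) :=
  integrable_prod_of_identDistrib (Z := fun s ↦ Y (s + t))
    (hm.comp (by fun_prop : Measurable fun p : ℝ × Ω ↦ (p.1 + t, p.2)))
    (fun s ↦ hY.identDistrib (fun u ↦ hm.of_uncurry_left) (s + t) 0) hint

/-- The process whose value at time `t` is the average of `Y` seen from time `t`, weighted
by `F`. -/
noncomputable def movingAverage {Ω E : Type*} [NormedAddCommGroup E] [NormedSpace ℝ E]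
    (F : Measure ℝ) (Y : ℝ → Ω → E) (t : ℝ) (ω : Ω) : E :=
  ∫ s, Y (s + t) ω ∂F

variable [NormedSpace ℝ E]

theorem measurable_movingAverage [SFinite F] (hm : Measurable fun p : ℝ × Ω ↦ Y p.1 p.2) :
    Measurable fun p : ℝ × Ω ↦ movingAverage F Y p.1 p.2 :=
  measurable_average (Y := fun s (p : ℝ × Ω) ↦ Y (s + p.1) p.2) (hm.comp
    (by fun_prop : Measurable fun q : ℝ × ℝ × Ω ↦ (q.1 + q.2.1, q.2.2)))

namespace IsStrictlyStationary

theorem integrable_movingAverage [SFinite P] [IsFiniteMeasure F] (hY : IsStrictlyStationary P Y)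
    (hm : Measurable fun p : ℝ × Ω ↦ Y p.1 p.2) (hint : Integrable (Y 0) P) (t : ℝ) :
    Integrable (movingAverage F Y t) P :=
  (hY.integrable_prod hm hint t).integral_prod_right

theorem ae_ae_tendsto_sampleMean [CompleteSpace E] [SFinite P] [IsProbabilityMeasure F]
    (hY : IsStrictlyStationary P Y) (hm : Measurable fun p : ℝ × Ω ↦ Y p.1 p.2)
    (hint : Integrable (Y 0) P) (t : ℝ) :
    ∀ᵐ s ∂Measure.infinitePi fun _ : ℕ ↦ F, ∀ᵐ ω ∂P,
      Tendsto (fun n : ℕ ↦ (n : ℝ)⁻¹ • ∑ i ∈ Finset.range n, Y (s i + t) ω) atTop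
        (𝓝 (movingAverage F Y t ω)) := by
  have hshift (i : ℕ) : Measurable fun p : (ℕ → ℝ) × Ω ↦ Y (p.1 i + t) p.2 :=
    hm.comp (by fun_prop : Measurable fun p : (ℕ → ℝ) × Ω ↦ (p.1 i + t, p.2))
  have hmean (n : ℕ) : Measurable fun p : (ℕ → ℝ) × Ω ↦
      (n : ℝ)⁻¹ • ∑ i ∈ Finset.range n, Y (p.1 i + t) p.2 :=
    (Finset.measurable_fun_sum _ fun i _ ↦ hshift i).const_smul (n : ℝ)⁻¹
  have havg : Measurable (movingAverage F Y t) := (measurable_movingAverage hm).of_uncurry_left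
  rw [Measure.ae_ae_comm (measurableSet_tendsto_fun hmean (havg.comp measurable_snd))]
  filter_upwards [(hY.integrable_prod (F := F) hm hint t).prod_left_ae] with ω hω
  exact ae_tendsto_sampleMean (hm.comp (by fun_prop : Measurable fun s ↦ (s + t, ω))) hω

theorem identDistrib_movingAverage_prodMk [CompleteSpace E] [IsProbabilityMeasure P]
    [IsProbabilityMeasure F] (hY : IsStrictlyStationary P Y)
    (hm : Measurable fun p : ℝ × Ω ↦ Y p.1 p.2) (hint : Integrable (Y 0) P) (t : ℝ) :
    IdentDistrib (fun ω ↦ (movingAverage F Y t ω, Y t ω))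
      (fun ω ↦ (movingAverage F Y 0 ω, Y 0 ω)) P P := by
  obtain ⟨s, ht, h0⟩ := ((hY.ae_ae_tendsto_sampleMean (F := F) hm hint t).and
    (hY.ae_ae_tendsto_sampleMean hm hint 0)).exists
  have hmeas (u : ℝ) : AEMeasurable (fun ω ↦ (movingAverage F Y u ω, Y u ω)) P :=
    ((measurable_movingAverage hm).of_uncurry_left.prodMk hm.of_uncurry_left).aemeasurable
  refine identDistrib_of_tendsto (fun n ↦ ?_) (hmeas t) (hmeas 0)
    (ht.mono fun ω h ↦ h.prodMk_nhds tendsto_const_nhds)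
    (h0.mono fun ω h ↦ h.prodMk_nhds tendsto_const_nhds)
  let times : Fin (n + 1) → ℝ := Fin.cons 0 fun i ↦ s i
  let G (x : Fin (n + 1) → E) : E × E := ((n : ℝ)⁻¹ • ∑ i : Fin n, x i.succ, x 0)
  have hG : Measurable G := by fun_prop
  have h := (hY.identDistrib_pi (fun u ↦ hm.of_uncurry_left) t times).comp hG
  simpa [G, times, Function.comp_def, Finset.sum_range] using h

end IsStrictlyStationary

end MovingAverage

section ExponentialAverage

theorem absolutelyContinuousOnInterval_comp_of_lipschitzOnWith {X Z : Type*} [PseudoMetricSpace X]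
    [PseudoMetricSpace Z] {K : NNReal} {g : X → Z} {x : ℝ → X} {a b : ℝ}
    (hg : LipschitzOnWith K g (x '' Set.uIcc a b)) (hx : AbsolutelyContinuousOnInterval x a b) :
    AbsolutelyContinuousOnInterval (g ∘ x) a b := by
  have hlim := Tendsto.const_mul (K : ℝ) hx
  simp only [mul_zero] at hlim
  refine squeeze_zero' (.of_forall fun E ↦ Finset.sum_nonneg fun _ _ ↦ dist_nonneg) ?_ hlim
  filter_upwards [mem_inf_of_right (mem_principal_self _)] with E hE
  rw [Finset.mul_sum]
  exact Finset.sum_le_sum fun i hi ↦ hg.dist_le_mul _ (Set.mem_image_of_mem x (hE.1 i hi).1) _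
    (Set.mem_image_of_mem x (hE.1 i hi).2)

theorem integral_comp_mul_deriv_of_absolutelyContinuous {φ x x' : ℝ → ℝ} {a b : ℝ}
    (hφ : Continuous φ) (hx : AbsolutelyContinuousOnInterval x a b)
    (hx' : ∀ᵐ t, t ∈ Set.uIcc a b → HasDerivAt x (x' t) t) :
    ∫ t in a..b, φ (x t) * x' t = ∫ u in x a..x b, φ u := by
  let Φ (v : ℝ) : ℝ := ∫ u in 0..v, φ u
  have hΦ (v : ℝ) : HasDerivAt Φ (φ v) v := hφ.integral_hasStrictDerivAt 0 v |>.hasDerivAt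
  have hΦ_smooth : ContDiff ℝ 1 Φ := by
    rw [contDiff_one_iff_deriv, show deriv Φ = φ from funext fun v ↦ (hΦ v).deriv]
    exact ⟨fun v ↦ (hΦ v).differentiableAt, hφ⟩
  obtain ⟨K, hK⟩ := hΦ_smooth.locallyLipschitz.locallyLipschitzOn.exists_lipschitzOnWith_of_compact
    (isCompact_uIcc.image_of_continuousOn hx.continuousOn)
  calc ∫ t in a..b, φ (x t) * x' t = ∫ t in a..b, deriv (Φ ∘ x) t := by
        refine intervalIntegral.integral_congr_ae ?_
        filter_upwards [hx'] with t ht htab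
        exact ((hΦ (x t)).comp t (ht (Set.uIoc_subset_uIcc htab))).deriv.symm
    _ = Φ (x b) - Φ (x a) :=
        (absolutelyContinuousOnInterval_comp_of_lipschitzOnWith hK hx).integral_deriv_eq_sub
    _ = ∫ u in x a..x b, φ u := intervalIntegral.integral_interval_sub_left
        (hφ.intervalIntegrable _ _) (hφ.intervalIntegrable _ _)

theorem setIntegral_Ioi_comp_add_right {E : Type*} [NormedAddCommGroup E] [NormedSpace ℝ E]
    (g : ℝ → E) (a t : ℝ) : ∫ s in Set.Ioi a, g (s + t) = ∫ u in Set.Ioi (a + t), g u := by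
  have h := (measurePreserving_add_right volume t).setIntegral_preimage_emb
    (measurableEmbedding_addRight t) g (Set.Ioi (a + t))
  rwa [Set.preimage_add_const_Ioi, add_sub_cancel_right] at h

theorem integral_comp_add_expMeasure_one {y : ℝ → ℝ} (hy : Integrable y (expMeasure 1)) {t : ℝ}
    (ht : 0 ≤ t) :
    ∫ s, y (s + t) ∂expMeasure 1 =
      Real.exp t * (∫ s, y s ∂expMeasure 1 - ∫ u in 0..t, Real.exp (-u) * y u) := by
  rw [integrable_expMeasure_iff zero_le_one] at hy
  simp only [one_mul, smul_eq_mul] at hy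
  simp only [integral_expMeasure zero_le_one, one_mul, smul_eq_mul]
  rw [← intervalIntegral.integral_interval_add_Ioi hy (hy.mono_set (Set.Ioi_subset_Ioi ht)),
    add_sub_cancel_left]
  have h := setIntegral_Ioi_comp_add_right (fun u ↦ Real.exp (-u) * y u) 0 t
  rw [zero_add] at h
  rw [← h, ← integral_const_mul]
  congr! 2
  rw [← mul_assoc, ← Real.exp_add, neg_add_rev, add_neg_cancel_left]

theorem integral_comp_mul_sub_expMeasure_one {φ y : ℝ → ℝ} (hφ : Continuous φ)
    (hy : Integrable y (expMeasure 1)) {x : ℝ → ℝ} (hx : ∀ t, x t = ∫ s, y (s + t) ∂expMeasure 1)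
    {T : ℝ} (hT : 0 ≤ T) :
    ∫ t in 0..T, φ (x t) * (x t - y t) = ∫ u in x 0..x T, φ u := by
  let g (u : ℝ) : ℝ := Real.exp (-u) * y u
  let z (t : ℝ) : ℝ := Real.exp t * (∫ s, y s ∂expMeasure 1 - ∫ u in 0..t, g u)
  have hxz {t : ℝ} (ht : 0 ≤ t) : x t = z t :=
    (hx t).trans (integral_comp_add_expMeasure_one hy ht)
  have hg : IntervalIntegrable g volume 0 T := by
    have := (integrable_expMeasure_iff zero_le_one).1 hy
    simp only [one_mul, smul_eq_mul] at this
    exact (intervalIntegrable_iff_integrableOn_Ioc_of_le hT).2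
      (this.mono_set Set.Ioc_subset_Ioi_self)
  have hz : AbsolutelyContinuousOnInterval z 0 T :=
    Real.contDiff_exp.contDiffOn.absolutelyContinuousOnInterval.fun_mul
      (contDiffOn_const.absolutelyContinuousOnInterval.fun_sub
        (hg.absolutelyContinuousOnInterval_intervalIntegral Set.left_mem_uIcc))
  have hz' : ∀ᵐ t, t ∈ Set.uIcc 0 T → HasDerivAt z (z t - y t) t := by
    filter_upwards [hg.ae_hasDerivAt_integral] with t ht htT
    refine ((Real.hasDerivAt_exp t).mul
      ((ht htT 0 Set.left_mem_uIcc).const_sub (∫ s, y s ∂expMeasure 1))).congr_deriv ?_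
    have hcancel : Real.exp t * Real.exp (-t) = 1 := by rw [← Real.exp_add]; simp
    linear_combination -y t * hcancel
  rw [hxz le_rfl, hxz hT, ← integral_comp_mul_deriv_of_absolutelyContinuous hφ hz hz']
  refine intervalIntegral.integral_congr fun t ht ↦ ?_
  rw [Set.uIcc_of_le hT] at ht
  simp only [hxz ht.1]

theorem integral_intervalIntegral_eq_zero_of_identDistrib {Ω : Type*} [MeasurableSpace Ω]
    {P : Measure Ω} {X₀ X₁ : Ω → ℝ} {φ : ℝ → ℝ} {C : ℝ} (hφ : Continuous φ)
    (hC : ∀ u, ‖φ u‖ ≤ C) (hX : IdentDistrib X₀ X₁ P P) (hint : Integrable X₀ P) :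
    ∫ ω, (∫ u in X₀ ω..X₁ ω, φ u) ∂P = 0 := by
  let Φ (v : ℝ) : ℝ := ∫ u in 0..v, φ u
  have hΦ : Continuous Φ := intervalIntegral.continuous_primitive
    (fun a b ↦ hφ.intervalIntegrable a b) 0
  have hΦX : IdentDistrib (Φ ∘ X₀) (Φ ∘ X₁) P P := hX.comp hΦ.measurable
  have hΦint : Integrable (Φ ∘ X₀) P := by
    refine (hint.norm.const_mul C).mono' hΦX.aemeasurable_fst.aestronglyMeasurable
      (.of_forall fun ω ↦ ?_)
    simpa using intervalIntegral.norm_integral_le_of_norm_le_const (a := 0) (b := X₀ ω)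
      fun u _ ↦ hC u
  have hsub (ω : Ω) : ∫ u in X₀ ω..X₁ ω, φ u = (Φ ∘ X₁) ω - (Φ ∘ X₀) ω :=
    (intervalIntegral.integral_interval_sub_left (hφ.intervalIntegrable _ _)
      (hφ.intervalIntegrable _ _)).symm
  simp only [hsub]
  rw [integral_sub (hΦX.integrable_iff.1 hΦint) hΦint, hΦX.integral_eq, sub_self]

theorem IsStrictlyStationary.integral_comp_movingAverage_mul_sub_eq_zero {Ω : Type*}
    [MeasurableSpace Ω] {P : Measure Ω} [IsProbabilityMeasure P] {Y : ℝ → Ω → ℝ}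
    (hY : IsStrictlyStationary P Y) (hm : Measurable fun p : ℝ × Ω ↦ Y p.1 p.2)
    (hint : Integrable (Y 0) P) {φ : ℝ → ℝ} {C : ℝ} (hφ : Continuous φ) (hC : ∀ u, ‖φ u‖ ≤ C) :
    ∫ ω, φ (movingAverage (expMeasure 1) Y 0 ω) * (movingAverage (expMeasure 1) Y 0 ω - Y 0 ω) ∂P
      = 0 := by
  have := isProbabilityMeasure_expMeasure one_pos
  set X : ℝ → Ω → ℝ := movingAverage (expMeasure 1) Y
  have hXm : Measurable fun p : ℝ × Ω ↦ X p.1 p.2 := measurable_movingAverage hm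
  have hXint : Integrable (X 0) P := hY.integrable_movingAverage hm hint 0
  have hXY (t : ℝ) := hY.identDistrib_movingAverage_prodMk (F := expMeasure 1) hm hint t
  let D (t : ℝ) (ω : Ω) : ℝ := φ (X t ω) * (X t ω - Y t ω)
  have hDm : Measurable fun p : ℝ × Ω ↦ D p.1 p.2 :=
    (hφ.measurable.comp hXm).mul (hXm.sub hm)
  have hD (t : ℝ) : IdentDistrib (D t) (D 0) P P :=
    (hXY t).comp (u := fun p : ℝ × ℝ ↦ φ p.1 * (p.1 - p.2)) (by fun_prop)
  have hDint : Integrable (D 0) P := (hXint.sub hint).bdd_mul (c := C)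
    (hφ.measurable.comp hXm.of_uncurry_left).aestronglyMeasurable (.of_forall fun ω ↦ hC _)
  have hpath : ∀ᵐ ω ∂P, ∫ t in 0..1, D t ω = ∫ u in X 0 ω..X 1 ω, φ u := by
    filter_upwards [(hY.integrable_prod (F := expMeasure 1) hm hint 0).prod_left_ae] with ω hω
    simp only [add_zero] at hω
    exact integral_comp_mul_sub_expMeasure_one hφ hω (fun t ↦ rfl) zero_le_one
  calc ∫ ω, D 0 ω ∂P = ∫ t in (0 : ℝ)..1, ∫ ω, D t ω ∂P := by
        simp only [(hD _).integral_eq, intervalIntegral.integral_const, sub_zero, one_smul]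
    _ = ∫ ω, (∫ t in 0..1, D t ω) ∂P := by
        simp only [intervalIntegral.integral_of_le zero_le_one]
        exact integral_integral_swap (integrable_prod_of_identDistrib hDm hD hDint)
    _ = ∫ ω, (∫ u in X 0 ω..X 1 ω, φ u) ∂P := integral_congr_ae hpath
    _ = 0 := integral_intervalIntegral_eq_zero_of_identDistrib hφ hC
        ((hXY 1).comp measurable_fst).symm hXint

theorem averageIsCondExp_expMeasure_one : AverageIsCondExp (expMeasure 1) := by
  intro Ω _ P _ Y hm hY hint X hX
  have := isProbabilityMeasure_expMeasure one_pos
  obtain rfl : X = movingAverage (expMeasure 1) Y 0 := funext fun ω ↦ by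
    simp only [hX, movingAverage, add_zero]
  have hXm : Measurable (movingAverage (expMeasure 1) Y 0) :=
    (measurable_movingAverage hm).of_uncurry_left
  set X := movingAverage (expMeasure 1) Y 0
  have hXint : Integrable X P := hY.integrable_movingAverage hm hint 0
  have hzero : P[X - Y 0 | MeasurableSpace.comap X inferInstance] =ᵐ[P] 0 :=
    condExp_comap_ae_eq_zero_of_integral_contDiff_smul_eq_zero hXm (hXint.sub hint)
      fun φ hφ hφ_supp ↦ by
        obtain ⟨C, hC⟩ := hφ_supp.exists_bound_of_continuous hφ.continuous
        exact hY.integral_comp_movingAverage_mul_sub_eq_zero hm hint hφ.continuous hC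
  have hX_self : P[X | MeasurableSpace.comap X inferInstance] = X :=
    condExp_of_stronglyMeasurable hXm.comap_le (comap_measurable X).stronglyMeasurable hXint
  have hsub := condExp_sub hXint hint (MeasurableSpace.comap X inferInstance)
  rw [hX_self] at hsub
  filter_upwards [hzero, hsub] with ω h₁ h₂
  exact (sub_eq_zero.1 (h₂.symm.trans h₁)).symm

end ExponentialAverage

theorem AverageIsCondExp.map_mul_left {F : Measure ℝ} (hF : AverageIsCondExp F) (k : ℝ) :
    AverageIsCondExp (F.map (k * ·)) := by
  intro Ω _ P hP Y hm hY hint X hX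
  have hk : Measurable fun p : ℝ × Ω ↦ Y (k * p.1) p.2 :=
    hm.comp (by fun_prop : Measurable fun p : ℝ × Ω ↦ (k * p.1, p.2))
  have hYω (ω : Ω) : Measurable fun t ↦ Y t ω := hm.of_uncurry_right
  have h := hF Ω _ P hP (fun t ↦ Y (k * t)) hk (hY.comp_mul_left k)
    (by simpa only [mul_zero] using hint) X fun ω ↦ by
      rw [hX, integral_map (by fun_prop) (hYω ω).aestronglyMeasurable]
  simpa only [mul_zero] using h

theorem statement9_general (F : Measure ℝ) [IsProbabilityMeasure F] :
    AverageIsCondExp F ↔ ∃ k : ℝ, F = (expMeasure 1).map (k * ·) := by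
  refine ⟨fun hF ↦ ?_, ?_⟩
  · obtain ⟨k, hk⟩ := exists_charFun_eq_inv_one_sub hF.charFun_eq
    have := isProbabilityMeasure_expMeasure one_pos
    exact ⟨k, Measure.ext_of_charFun (funext fun x ↦
      (hk x).trans (charFun_map_mul_expMeasure_one k x).symm)⟩
  · rintro ⟨k, rfl⟩
    exact averageIsCondExp_expMeasure_one.map_mul_left k

/-- Let `F` be a probability distribution on `[0,∞)` with a density with
respect to Lebesgue measure.  Then the following are equivalent:
(i) for every probability space and every jointly measurable stationary real-valued
process `Y` with `E|Y_0| < ∞`, setting `Ȳ_F := ∫₀^∞ Y_t dF(t)`, one has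
`E(Y_0 | σ(Ȳ_F)) = Ȳ_F` a.s.;
(ii) `F` is the exponential distribution with density `λ e^{−λt}` for some `λ ∈ (0,∞)`. -/
theorem statement9
    (F : Measure ℝ) [IsProbabilityMeasure F]
    (f : ℝ → ℝ)
    (hdens : F = MeasureTheory.volume.withDensity
      fun x => ENNReal.ofReal (Set.indicator (Set.Ici (0:ℝ)) f x)) :
    (∀ (Ω : Type) (_ : MeasurableSpace Ω) (P : Measure Ω), IsProbabilityMeasure P →
        ∀ Y : ℝ → Ω → ℝ, (Measurable fun p : ℝ × Ω => Y p.1 p.2) →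
        (∀ h : ℝ, ∀ (n : ℕ) (t : Fin n → ℝ),
          Measure.map (fun ω (i : Fin n) => Y (t i + h) ω) P
            = Measure.map (fun ω (i : Fin n) => Y (t i) ω) P) →
        Integrable (Y 0) P →
        ∀ YbarF : Ω → ℝ, (∀ ω, YbarF ω = ∫ t, Y t ω ∂F) →
          P[Y 0 | MeasurableSpace.comap YbarF inferInstance] =ᵐ[P] YbarF)
      ↔ (∃ l : ℝ, 0 < l ∧
          F = MeasureTheory.volume.withDensity
            (Set.indicator (Set.Ioi (0:ℝ)) fun t => ENNReal.ofReal (l * Real.exp (-(l * t))))) := by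
  simp only [← expMeasure_eq_withDensity_indicator]
  exact (statement9_general F).trans
    (exists_eq_map_mul_expMeasure_one_iff (ae_pos_of_eq_withDensity_indicator_Ici hdens))
end
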